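/- arXiv:1401.7449 — 2 statements merged into one kernel-verified Lean document; each statement's English description precedes it below -/
import Mathlib

section
/- Let λ : ℂ → ℍ be a smooth, nowhere vanishing quaternion-valued function, and define P(z) = conj(λ(z))·j·λ(z) and Q(z) = −conj(λ(z))·k·λ(z) (the values of the 1-form η = λ̄·df·λ on ∂/∂x and ∂/∂y for the plane f(x+iy) = x·j − y·k). Then ∂P/∂y = ∂Q/∂x holds on all of ℂ (i.e. η is closed) if and only if there exists a smooth function ρ : ℂ → ℝ such that −(j·∂λ/∂y + k·∂λ/∂x) = ρ·λ on all of ℂ. -/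
/-- The imaginary unit `j` of the quaternions. -/
def qj : Quaternion ℝ := ⟨0, 0, 1, 0⟩

/-- The imaginary unit `k` of the quaternions. -/
def qk : Quaternion ℝ := ⟨0, 0, 0, 1⟩

theorem qd_aux (l E : Quaternion ℝ) (hl : l ≠ 0)
    (h : star l * E - star E * l = 0) :
    E = (inner ℝ E l / ‖l‖ ^ 2) • l := by
  have hn : ‖l‖ ^ 2 ≠ 0 := by simpa using hl
  have h1 : star (star l * E) = star l * E := by
    rw [star_mul, star_star]
    exact (sub_eq_zero.mp h).symm
  have h2 : star l * E = (((star l * E).re : ℝ) : Quaternion ℝ) :=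
    Quaternion.star_eq_self.mp h1
  have h3 : (star l * E).re = inner ℝ E l := by
    rw [Quaternion.inner_def]
    simp only [Quaternion.re_mul, Quaternion.re_star, Quaternion.imI_star,
      Quaternion.imJ_star, Quaternion.imK_star]
    ring
  have h4 : (‖l‖ ^ 2) • E = (inner ℝ E l : ℝ) • l := by
    have : l * (star l * E) = (‖l‖ ^ 2) • E := by
      rw [← mul_assoc, Quaternion.self_mul_star, Quaternion.coe_mul_eq_smul,
        Quaternion.normSq_eq_norm_mul_self, sq]
    rw [← this, h2, h3, Quaternion.mul_coe_eq_smul]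
  rw [div_eq_inv_mul, mul_smul, ← h4, smul_smul, inv_mul_cancel₀ hn, one_smul]

theorem qd_fderiv (lam : ℂ → Quaternion ℝ) (a : Quaternion ℝ) (z v : ℂ)
    (h : DifferentiableAt ℝ lam z) :
    fderiv ℝ (fun w : ℂ => star (lam w) * a * lam w) z v =
      star (fderiv ℝ lam z v) * a * lam z + star (lam z) * a * fderiv ℝ lam z v := by
  haveI : StarModule ℝ (Quaternion ℝ) := ⟨fun r q => by
    rw [Quaternion.star_smul, star_trivial r]⟩
  have h1 : HasFDerivAt (fun w => star (lam w)) _ z := h.hasFDerivAt.star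
  have h2 := (h1.mul_const' a).mul' h.hasFDerivAt
  have h3 : HasFDerivAt (fun w : ℂ => star (lam w) * a * lam w) _ z := h2
  rw [h3.fderiv]
  simp only [add_apply, smul_apply, ContinuousLinearMap.comp_apply, smul_eq_mul, MulOpposite.smul_eq_mul_unop, MulOpposite.unop_op]
  rw [add_comm]
  rfl

/-- For a smooth nowhere vanishing `λ : ℂ → ℍ`, the 1-form `η = λ̄ · df · λ`
(for the plane `f(x+iy) = x·j − y·k`), with values `P = λ̄·j·λ` on `∂/∂x` and
`Q = −λ̄·k·λ` on `∂/∂y`, is closed (`∂P/∂y = ∂Q/∂x` everywhere) if and only if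
there is a smooth real function `ρ` with `D λ := −(j·∂λ/∂y + k·∂λ/∂x) = ρ·λ`. -/
theorem dirac_closedness_iff_eigen (lam : ℂ → Quaternion ℝ)
    (hsmooth : ContDiff ℝ (⊤ : ℕ∞) lam) (hnz : ∀ z : ℂ, lam z ≠ 0) :
    (∀ z : ℂ,
        fderiv ℝ (fun w : ℂ => star (lam w) * qj * lam w) z Complex.I =
          fderiv ℝ (fun w : ℂ => -(star (lam w) * qk * lam w)) z 1) ↔
      (∃ ρ : ℂ → ℝ, ContDiff ℝ (⊤ : ℕ∞) ρ ∧
        ∀ z : ℂ,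
          -(qj * fderiv ℝ lam z Complex.I + qk * fderiv ℝ lam z 1) = ρ z • lam z) := by
  have hd : ∀ z, DifferentiableAt ℝ lam z := fun z =>
    (hsmooth.differentiable (by simp)) z
  have hqj : star qj = -qj := Quaternion.star_eq_neg.mpr rfl
  have hqk : star qk = -qk := Quaternion.star_eq_neg.mpr rfl
  have key : ∀ z : ℂ,
      (fderiv ℝ (fun w : ℂ => star (lam w) * qj * lam w) z Complex.I =
          fderiv ℝ (fun w : ℂ => -(star (lam w) * qk * lam w)) z 1) ↔
      star (lam z) * (qj * fderiv ℝ lam z Complex.I + qk * fderiv ℝ lam z 1) -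
        star (qj * fderiv ℝ lam z Complex.I + qk * fderiv ℝ lam z 1) * lam z = 0 := by
    intro z
    rw [fderiv_fun_neg, neg_apply, qd_fderiv _ _ _ _ (hd z),
      qd_fderiv _ _ _ _ (hd z), ← sub_eq_zero]
    apply Eq.congr_left
    rw [star_add, star_mul, star_mul, hqj, hqk]
    noncomm_ring
  have hsm : ∀ v : ℂ, ContDiff ℝ (⊤ : ℕ∞) (fun z => fderiv ℝ lam z v) := fun v =>
    (hsmooth.fderiv_right (by simp)).clm_apply contDiff_const
  constructor
  · intro h
    refine ⟨fun z => -(inner ℝ (qj * fderiv ℝ lam z Complex.I + qk * fderiv ℝ lam z 1)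
      (lam z) / ‖lam z‖ ^ 2), ?_, ?_⟩
    · refine ContDiff.neg (ContDiff.div (ContDiff.inner ℝ ?_ hsmooth) (hsmooth.norm_sq ℝ) ?_)
      · exact (contDiff_const.mul (hsm _)).add (contDiff_const.mul (hsm _))
      · intro z
        simpa using hnz z
    · intro z
      rw [neg_smul, ← qd_aux _ _ (hnz z) ((key z).mp (h z))]
  · rintro ⟨ρ, -, h⟩ z
    rw [key, neg_eq_iff_eq_neg.mp (h z)]
    simp
end

section
/- Let λ₁, λ₂ : ℂ → ℂ be smooth functions and ρ : ℂ → ℝ a smooth real-valued function satisfying 2i·∂λ₂ = ρ·λ₁ and 2i·∂̄λ₁ = ρ·λ₂ on ℂ. Set λ = λ₁ + j·λ₂ : ℂ → ℍ, P(z) = conj(λ(z))·j·λ(z), and Q(z) = −conj(λ(z))·k·λ(z). Then ∂P/∂y = ∂Q/∂x on all of ℂ; that is, the ℍ-valued 1-form η = P dx + Q dy (the spin transform λ̄·df·λ of the plane f(x+iy) = x·j − y·k) is closed. -/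
/-- The embedding of `ℂ` into the quaternions, `a + b·i ↦ a + b·i`. -/
def CtoQ (z : ℂ) : Quaternion ℝ := ⟨z.re, z.im, 0, 0⟩

/-- Wirtinger derivative `∂g = ½(∂g/∂x − i ∂g/∂y)`. -/
noncomputable def wderiv (g : ℂ → ℂ) (z : ℂ) : ℂ :=
  (1 / 2) * (fderiv ℝ g z 1 - Complex.I * fderiv ℝ g z Complex.I)

/-- Conjugate Wirtinger derivative `∂̄g = ½(∂g/∂x + i ∂g/∂y)`. -/
noncomputable def wderivBar (g : ℂ → ℂ) (z : ℂ) : ℂ :=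
  (1 / 2) * (fderiv ℝ g z 1 + Complex.I * fderiv ℝ g z Complex.I)

theorem CtoQ_re (z : ℂ) : (CtoQ z).re = z.re := rfl
theorem CtoQ_imI (z : ℂ) : (CtoQ z).imI = z.im := rfl
theorem CtoQ_imJ (z : ℂ) : (CtoQ z).imJ = 0 := rfl
theorem CtoQ_imK (z : ℂ) : (CtoQ z).imK = 0 := rfl
theorem qj_re : (qj).re = 0 := rfl
theorem qj_imI : (qj).imI = 0 := rfl
theorem qj_imJ : (qj).imJ = 1 := rfl
theorem qj_imK : (qj).imK = 0 := rfl
theorem qk_re : (qk).re = 0 := rfl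
theorem qk_imI : (qk).imI = 0 := rfl
theorem qk_imJ : (qk).imJ = 0 := rfl
theorem qk_imK : (qk).imK = 1 := rfl

theorem starModuleQ : StarModule ℝ (Quaternion ℝ) :=
  ⟨fun r q => by ext <;> simp⟩

/-- `CtoQ` as a continuous real-linear map. -/
noncomputable def CtoQL : ℂ →L[ℝ] Quaternion ℝ :=
  LinearMap.toContinuousLinearMap
    { toFun := CtoQ
      map_add' := by intro a b; ext <;> simp [CtoQ_re, CtoQ_imI, CtoQ_imJ, CtoQ_imK]
      map_smul' := by intro a b; ext <;> simp [CtoQ_re, CtoQ_imI, CtoQ_imJ, CtoQ_imK] }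

theorem CtoQL_apply (z : ℂ) : CtoQL z = CtoQ z := rfl

/-- If smooth `λ₁, λ₂ : ℂ → ℂ` and a smooth real `ρ` satisfy `2i∂λ₂ = ρλ₁` and
`2i∂̄λ₁ = ρλ₂`, then for `λ = λ₁ + jλ₂` the `ℍ`-valued 1-form
`η = (λ̄ j λ) dx + (−λ̄ k λ) dy` is closed: `∂P/∂y = ∂Q/∂x` on all of `ℂ`. -/
theorem spin_form_closed (l1 l2 : ℂ → ℂ) (ρ : ℂ → ℝ)
    (h1 : ContDiff ℝ (⊤ : ℕ∞) l1) (h2 : ContDiff ℝ (⊤ : ℕ∞) l2) (hρ : ContDiff ℝ (⊤ : ℕ∞) ρ)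
    (heq1 : ∀ z : ℂ, 2 * Complex.I * wderiv l2 z = (ρ z : ℂ) * l1 z)
    (heq2 : ∀ z : ℂ, 2 * Complex.I * wderivBar l1 z = (ρ z : ℂ) * l2 z)
    (lam : ℂ → Quaternion ℝ)
    (hlam : ∀ w : ℂ, lam w = CtoQ (l1 w) + qj * CtoQ (l2 w)) :
    ∀ z : ℂ,
      fderiv ℝ (fun w : ℂ => star (lam w) * qj * lam w) z Complex.I =
        fderiv ℝ (fun w : ℂ => -(star (lam w) * qk * lam w)) z 1 := by
  intro z
  have d1 : HasFDerivAt l1 (fderiv ℝ l1 z) z :=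
    (h1.differentiable (by simp)).differentiableAt.hasFDerivAt
  have d2 : HasFDerivAt l2 (fderiv ℝ l2 z) z :=
    (h2.differentiable (by simp)).differentiableAt.hasFDerivAt
  have e1 := heq1 z
  have e2 := heq2 z
  unfold wderiv at e1
  unfold wderivBar at e2
  have hl : lam = fun w => CtoQL (l1 w) + qj * CtoQL (l2 w) := funext hlam
  have dl := (CtoQL.hasFDerivAt.comp z d1).add ((CtoQL.hasFDerivAt.comp z d2).const_mul qj)
  replace dl : HasFDerivAt lam (CtoQL ∘SL fderiv ℝ l1 z + qj • CtoQL ∘SL fderiv ℝ l2 z) z := by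
    rw [hl]; exact dl
  have := starModuleQ
  have dP := (dl.star.mul_const' qj).mul' dl
  have dQ := ((dl.star.mul_const' qk).mul' dl).neg
  have eP := congrArg (fun L => L Complex.I) dP.fderiv
  have eQ := congrArg (fun L => L 1) dQ.fderiv
  refine eP.trans (Eq.trans ?_ eQ.symm)
  clear eP eQ dP dQ dl
  simp only [hlam z]
  generalize fderiv ℝ l1 z = D1 at *
  generalize fderiv ℝ l2 z = D2 at *
  have e1r := congrArg Complex.re e1
  have e1i := congrArg Complex.im e1
  have e2r := congrArg Complex.re e2
  have e2i := congrArg Complex.im e2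
  simp at e1r e1i e2r e2i
  ext <;> simp [CtoQL_apply,
    CtoQ_re, CtoQ_imI, CtoQ_imJ, CtoQ_imK,
    qj_re, qj_imI, qj_imJ, qj_imK, qk_re, qk_imI, qk_imJ, qk_imK]
  all_goals try ring_nf at *
  all_goals grind
end
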